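/- Let λ > 0, L ≥ 0, and let x_1, …, x_n ∈ ℝ^d satisfy ‖x_s‖ ≤ L (Euclidean norm) for all s. Then det(λI + Σ_{s=1}^n x_s x_sᵀ) ≤ (λ + n·L²/d)^d. -/

import Mathlib

open Matrix Finset

/-! For a positive semidefinite matrix, the determinant is the product of the eigenvalues and the
trace is their sum, so AM-GM bounds the determinant by a power of the normalized trace. The trace
of `λI + ∑ x_s x_sᴴ` is `dλ + ∑ ‖x_s‖²`. -/

theorem prod_le_sum_div_card_pow {ι : Type*} (s : Finset ι) (f : ι → ℝ)
    (hf : ∀ i ∈ s, 0 ≤ f i) : ∏ i ∈ s, f i ≤ ((∑ i ∈ s, f i) / #s) ^ #s := by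
  rcases s.eq_empty_or_nonempty with rfl | hs
  · simp
  have hprod : 0 ≤ ∏ i ∈ s, f i := prod_nonneg hf
  have amgm : (∏ i ∈ s, f i) ^ (#s : ℝ)⁻¹ ≤ (∑ i ∈ s, f i) / #s := by
    simpa using Real.geom_mean_le_arith_mean s (fun _ ↦ 1) f (by simp) (by simpa using hs) hf
  calc
    ∏ i ∈ s, f i = ((∏ i ∈ s, f i) ^ (#s : ℝ)⁻¹) ^ #s :=
      (Real.rpow_inv_natCast_pow hprod hs.card_ne_zero).symm
    _ ≤ ((∑ i ∈ s, f i) / #s) ^ #s := by gcongr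

theorem dotProduct_star_self_eq_norm_sq {𝕜 ι : Type*} [RCLike 𝕜] [Fintype ι] (v : ι → 𝕜) :
    v ⬝ᵥ star v = (‖WithLp.toLp 2 v‖ : 𝕜) ^ 2 := by
  rw [← inner_self_eq_norm_sq_to_K, EuclideanSpace.inner_toLp_toLp]

/-- The regularized Gram matrix `λI + ∑ x_s x_sᴴ` of the family `x`, the object of the determinant
bound. Over `ℝ` the star is trivial and `x_sᴴ` is `x_sᵀ`. -/
def regularizedGram {R ι κ : Type*} [CommSemiring R] [StarRing R] [DecidableEq ι] [Fintype κ]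
    (lam : R) (x : κ → ι → R) : Matrix ι ι R :=
  lam • 1 + ∑ s, vecMulVec (x s) (star (x s))

theorem trace_regularizedGram {R ι κ : Type*} [CommSemiring R] [StarRing R] [Fintype ι]
    [DecidableEq ι] [Fintype κ] (lam : R) (x : κ → ι → R) :
    (regularizedGram lam x).trace = Fintype.card ι * lam + ∑ s, x s ⬝ᵥ star (x s) := by
  simp [regularizedGram, trace_sum, trace_vecMulVec, mul_comm]

theorem posSemidef_regularizedGram {R ι κ : Type*} [CommRing R] [PartialOrder R] [StarRing R]
    [StarOrderedRing R] [Finite ι] [DecidableEq ι] [Fintype κ] {lam : R} (hlam : 0 ≤ lam)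
    (x : κ → ι → R) : (regularizedGram lam x).PosSemidef :=
  (PosSemidef.one.smul hlam).add (posSemidef_sum _ fun s _ ↦ posSemidef_vecMulVec_self_star (x s))

section RCLike

open scoped ComplexOrder

variable {𝕜 ι κ : Type*} [RCLike 𝕜] [Fintype ι] [DecidableEq ι] [Fintype κ]

theorem det_le_trace_div_card_pow {A : Matrix ι ι 𝕜} (hA : A.PosSemidef) :
    A.det ≤ (A.trace / Fintype.card ι) ^ Fintype.card ι := by
  rw [hA.isHermitian.det_eq_prod_eigenvalues, hA.isHermitian.trace_eq_sum_eigenvalues]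
  exact_mod_cast prod_le_sum_div_card_pow univ hA.isHermitian.eigenvalues
    fun i _ ↦ hA.eigenvalues_nonneg i

theorem det_regularizedGram_le {lam : 𝕜} (hlam : 0 ≤ lam) (x : κ → ι → 𝕜) :
    (regularizedGram lam x).det ≤
      (lam + (∑ s, (‖WithLp.toLp 2 (x s)‖ : 𝕜) ^ 2) / Fintype.card ι) ^ Fintype.card ι := by
  rcases isEmpty_or_nonempty ι with _ | _
  · simp
  have hcard : (Fintype.card ι : 𝕜) ≠ 0 := Nat.cast_ne_zero.mpr Fintype.card_ne_zero
  have htrace : (regularizedGram lam x).trace / Fintype.card ι =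
      lam + (∑ s, (‖WithLp.toLp 2 (x s)‖ : 𝕜) ^ 2) / Fintype.card ι := by
    simp only [trace_regularizedGram, dotProduct_star_self_eq_norm_sq, add_div,
      mul_div_cancel_left₀ lam hcard]
  exact htrace ▸ det_le_trace_div_card_pow (posSemidef_regularizedGram hlam x)

theorem gram_det_le_general {lam : 𝕜} {L : ℝ} (hlam : 0 ≤ lam) (x : κ → ι → 𝕜)
    (hx : ∀ s, ‖WithLp.toLp 2 (x s)‖ ≤ L) :
    (regularizedGram lam x).det ≤
      (lam + Fintype.card κ * (L : 𝕜) ^ 2 / Fintype.card ι) ^ Fintype.card ι := by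
  have hsum : ∑ s, ‖WithLp.toLp 2 (x s)‖ ^ 2 ≤ Fintype.card κ * L ^ 2 := by
    simpa using sum_le_card_nsmul univ _ (L ^ 2) fun s _ ↦
      pow_le_pow_left₀ (norm_nonneg _) (hx s) 2
  have hmean : (∑ s, (‖WithLp.toLp 2 (x s)‖ : 𝕜) ^ 2) / Fintype.card ι ≤
      Fintype.card κ * (L : 𝕜) ^ 2 / Fintype.card ι := by
    exact_mod_cast div_le_div_of_nonneg_right hsum (Nat.cast_nonneg (Fintype.card ι))
  have hmean_nonneg : 0 ≤ (∑ s, (‖WithLp.toLp 2 (x s)‖ : 𝕜) ^ 2) / Fintype.card ι := by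
    exact_mod_cast (by positivity : 0 ≤ (∑ s, ‖WithLp.toLp 2 (x s)‖ ^ 2) / Fintype.card ι)
  exact (det_regularizedGram_le hlam x).trans
    (pow_le_pow_left₀ (add_nonneg hlam hmean_nonneg) (by gcongr) _)

end RCLike

/-- Determinant bound: if `‖x_s‖ ≤ L` for all `s`, then
`det(λI + ∑ x_s x_sᵀ) ≤ (λ + nL²/d)^d`. -/
theorem gram_det_le {d n : ℕ} (lam L : ℝ) (hlam : 0 < lam) (hL : 0 ≤ L)
    (x : Fin n → (Fin d → ℝ)) (hx : ∀ s, Real.sqrt (x s ⬝ᵥ x s) ≤ L) :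
    (lam • (1 : Matrix (Fin d) (Fin d) ℝ) + ∑ s, vecMulVec (x s) (x s)).det ≤
      (lam + (n : ℝ) * L ^ 2 / (d : ℝ)) ^ (d : ℕ) := by
  simpa [regularizedGram] using gram_det_le_general hlam.le x fun s ↦ by
    simpa [EuclideanSpace.norm_eq, dotProduct, sq] using hx s
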